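/- Let F be a family of accepted relations with a progression ⤳, and let P be an up-to technique that is finitely convergent with finite convergence constant N, extensive, and compatible. If P(R) is defined and R ⤳ P(R), then for all n > N, Pⁿ(R) is defined, Pⁿ(R) ⤳ Pⁿ(R), and there exists R' ∈ F with Pⁿ(R) ⊆ R'. -/

import Mathlib

/-!
By compatibility, `R ⤳ P R` propagates along the iteration to `Pⁿ R ⤳ Pⁿ⁺¹ R`, with all
iterates defined (`exists_prog_kiter`). For `n > N` convergence gives `Pⁿ R = Pⁿ⁺¹ R`, so `Pⁿ R`
progresses to itself and is contained in an accepted relation.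
-/

/-- n-fold Kleisli iterate of a partial function on `Set α`. -/
def kiter {α : Type*} (P : Set α → Part (Set α)) : ℕ → Set α → Part (Set α)
  | 0, R => Part.some R
  | n+1, R => (kiter P n R).bind P

/-- Starting from `R ⤳ P R`, every iterate is defined and `Pⁿ R ⤳ Pⁿ⁺¹ R`; here `S` is `Pⁿ R`
and `T` is `Pⁿ⁺¹ R`. -/
theorem exists_prog_kiter {α : Type*} (P : Set α → Part (Set α)) (prog : Set α → Set α → Prop)
    (hcompat : ∀ R S, prog R S →
      (P R).Dom ∧ (P S).Dom ∧ ∀ A B, A ∈ P R → B ∈ P S → prog A B)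
    {R A : Set α} (hA : A ∈ P R) (hRA : prog R A) (n : ℕ) :
    ∃ S T, S ∈ kiter P n R ∧ T ∈ P S ∧ prog S T := by
  induction n with
  | zero => exact ⟨R, A, Part.mem_some R, hA, hRA⟩
  | succ n ih =>
    obtain ⟨S, T, hS, hT, hST⟩ := ih
    obtain ⟨-, hdom, hstep⟩ := hcompat S T hST
    exact ⟨T, (P T).get hdom, Part.mem_bind hS hT, Part.get_mem hdom,
      hstep _ _ hT (Part.get_mem hdom)⟩

theorem stmt_2 {α : Type*} (F : Set (Set α)) (prog : Set α → Set α → Prop)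
    (hprog : ∀ R, prog R R → ∃ R' ∈ F, R ⊆ R')
    (P : Set α → Part (Set α))
    (N : ℕ)
    (hconv : ∀ n m : ℕ, N < n → N < m → kiter P n = kiter P m)
    (hext : ∀ R A, A ∈ P R → R ⊆ A)
    (hcompat : ∀ R S, prog R S →
      (P R).Dom ∧ (P S).Dom ∧ ∀ A B, A ∈ P R → B ∈ P S → prog A B) :
    ∀ R A, A ∈ P R → prog R A → ∀ n : ℕ, N < n →
      ∃ S, S ∈ kiter P n R ∧ prog S S ∧ ∃ R' ∈ F, S ⊆ R' := by
  intro R A hA hRA n hn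
  obtain ⟨S, T, hS, hT, hST⟩ := exists_prog_kiter P prog hcompat hA hRA n
  have hT' : T ∈ kiter P n R := by
    rw [hconv n (n + 1) hn (by omega)]
    exact Part.mem_bind hS hT
  obtain rfl := Part.mem_unique hS hT'
  exact ⟨S, hS, hST, hprog S hST⟩
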